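/- (Example 4.4) Let r₁ = 1/4, r₂ = 1/2, p₁ = 1/4, p₂ = 3/4, so S₁(x) = x/4 and S₂(x) = x/2 + 1/2, and let P be a Borel probability measure on ℝ satisfying P = (1/4)·(P∘S₁⁻¹) + (3/4)·(P∘S₂⁻¹) with P([0,1]) = 1. Then: (a) E(X) = ∫ x dP(x) = 2/3; and (b) the set α = {1/6, 7/12, 11/12} together with the cells J₁ = [0, 1/4], J₂₁ = [1/2, 5/8], J₂₂ = [3/4, 1] forms a centroidal Voronoi tessellation with three means, i.e., P(J₁ ∪ J₂₁ ∪ J₂₂) = 1, the centroids satisfy (1/P(J₁)) ∫_{J₁} x dP(x) = 1/6, (1/P(J₂₁)) ∫_{J₂₁} x dP(x) = 7/12, (1/P(J₂₂)) ∫_{J₂₂} x dP(x) = 11/12, and every point of each cell attains its minimum distance to α at the corresponding generator. -/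

import Mathlib

open MeasureTheory

/-!
If the images `S i '' K` of a set `K` carrying `P` are disjoint, only the `i`-th branch of the
self-similarity identity charges `S i '' J` for `J ⊆ K`. So `P` restricted to `S i '' J` is `w i`
times the image under `S i` of `P` restricted to `J`: masses scale by `w i` and, `S i` being affine,
centroids are mapped by `S i`. As `J₁ = S₁ [0, 1]`, `J₂₁ = S₂ J₁` and `J₂₂ = S₂ (S₂ [0, 1])`, their
centroids are `S₁ m`, `S₂ (S₁ m)` and `S₂ (S₂ m)`, where the mean `m` of `P` is the solution `2 / 3`
of `m = w₁ S₁ m + w₂ S₂ m`.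
-/

open Set Function
open scoped ENNReal

section Affine

variable {α E F : Type*} [MeasurableSpace α] {μ : Measure α} [IsFiniteMeasure μ] [NeZero μ]
  [NormedAddCommGroup E] [NormedSpace ℝ E] [CompleteSpace E]
  [NormedAddCommGroup F] [NormedSpace ℝ F] [CompleteSpace F]

theorem average_continuousAffineMap_comp (T : E →ᴬ[ℝ] F) {f : α → E} (hf : Integrable f μ) :
    ⨍ x, T (f x) ∂μ = T (⨍ x, f x ∂μ) := by
  have hT (y : E) : T y = T.contLinear y + T 0 := congrFun T.decomp y
  have hf' : Integrable f ((μ univ)⁻¹ • μ) := hf.to_average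
  simp only [hT (f _), hT (⨍ x, f x ∂μ)]
  rw [average, integral_add (T.contLinear.integrable_comp hf') (integrable_const _),
    T.contLinear.integral_comp_comm hf', integral_const, probReal_univ, one_smul, average]

end Affine

/-- The cylinder set `J_σ = S_σ K` of the word `σ = σ₁ ⋯ σ_n`, where `S_σ = S σ₁ ∘ ⋯ ∘ S σ_n`. -/
def wordCell {ι α : Type*} (S : ι → α → α) (K : Set α) (σ : List ι) : Set α :=
  σ.foldr (fun i A => S i '' A) K

theorem wordCell_subset {ι α : Type*} {S : ι → α → α} {K : Set α} (hSK : ∀ i, MapsTo (S i) K K)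
    (σ : List ι) : wordCell S K σ ⊆ K := by
  induction σ with
  | nil => exact Subset.rfl
  | cons i σ ih => exact (image_mono ih).trans (hSK i).image_subset

/-- `P` is invariant under the iterated function system of the maps `S i`, chosen with weights
`w i`. The weights are not required to add up to one. -/
def IsSelfSimilar {ι α : Type*} [Fintype ι] [MeasurableSpace α] (w : ι → ℝ≥0∞) (S : ι → α → α)
    (P : Measure α) : Prop :=
  P = ∑ i, w i • P.map (S i)

namespace IsSelfSimilar

section Measure

variable {ι α : Type*} [Fintype ι] [MeasurableSpace α] {w : ι → ℝ≥0∞} {S : ι → α → α}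
  {P : Measure α}

theorem ae_mem_iUnion_image (hP : IsSelfSimilar w S P) (hS : ∀ i, MeasurableEmbedding (S i))
    {A : ι → Set α} (hA : ∀ i, ∀ᵐ x ∂P, x ∈ A i) : ∀ᵐ x ∂P, x ∈ ⋃ i, S i '' A i := by
  rw [hP, ← Measure.sum_fintype, Measure.ae_sum_iff]
  refine fun i => Measure.ae_smul_measure ((hS i).ae_map_iff.2 ?_) (w i)
  filter_upwards [hA i] with x hx
  exact mem_iUnion_of_mem i (mem_image_of_mem (S i) hx)

variable {K J : Set α}

theorem restrict_image (hP : IsSelfSimilar w S P) (hS : ∀ i, MeasurableEmbedding (S i))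
    (hK : ∀ᵐ x ∂P, x ∈ K) (hdisj : Pairwise (Disjoint on fun i => S i '' K)) (hJ : J ⊆ K) (i : ι) :
    P.restrict (S i '' J) = w i • (P.restrict J).map (S i) := by
  have restrict_branch (j : ι) : (P.map (S j)).restrict (S i '' J) =
      (P.restrict (S j ⁻¹' (S i '' J))).map (S j) := (hS j).restrict_map P _
  have null_branch (j : ι) (hj : j ≠ i) : P.restrict (S j ⁻¹' (S i '' J)) = 0 := by
    rw [Measure.restrict_eq_zero, measure_eq_zero_iff_ae_notMem]
    filter_upwards [hK] with x hxK hx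
    exact (hdisj hj).notMem_of_mem_left (mem_image_of_mem _ hxK) (image_mono hJ hx)
  calc P.restrict (S i '' J)
      = (∑ j, w j • P.map (S j)).restrict (S i '' J) := by rw [← hP]
    _ = ∑ j, w j • (P.restrict (S j ⁻¹' (S i '' J))).map (S j) := by
      simp only [← Measure.restrictₗ_apply, map_sum, map_smul]
      simp only [Measure.restrictₗ_apply, restrict_branch]
    _ = w i • (P.restrict (S i ⁻¹' (S i '' J))).map (S i) :=
      Fintype.sum_eq_single i fun j hj => by rw [null_branch j hj, Measure.map_zero, smul_zero]
    _ = w i • (P.restrict J).map (S i) := by rw [preimage_image_eq J (hS i).injective]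

theorem measure_image (hP : IsSelfSimilar w S P) (hS : ∀ i, MeasurableEmbedding (S i))
    (hK : ∀ᵐ x ∂P, x ∈ K) (hdisj : Pairwise (Disjoint on fun i => S i '' K)) (hJ : J ⊆ K) (i : ι) :
    P (S i '' J) = w i * P J := by
  rw [← Measure.restrict_apply_univ, hP.restrict_image hS hK hdisj hJ i, Measure.smul_apply,
    (hS i).map_apply, preimage_univ, Measure.restrict_apply_univ, smul_eq_mul]

theorem measure_wordCell [IsProbabilityMeasure P] (hP : IsSelfSimilar w S P)
    (hS : ∀ i, MeasurableEmbedding (S i)) (hK : ∀ᵐ x ∂P, x ∈ K)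
    (hdisj : Pairwise (Disjoint on fun i => S i '' K)) (hSK : ∀ i, MapsTo (S i) K K)
    (σ : List ι) :
    P (wordCell S K σ) = (σ.map w).prod := by
  induction σ with
  | nil => exact (measure_congr (Filter.eventuallyEq_univ.2 hK)).trans measure_univ
  | cons i σ ih =>
    rw [List.map_cons, List.prod_cons, ← ih]
    exact hP.measure_image hS hK hdisj (wordCell_subset hSK σ) i

variable {E : Type*} [NormedAddCommGroup E] [NormedSpace ℝ E]

theorem setAverage_image (hP : IsSelfSimilar w S P) (hS : ∀ i, MeasurableEmbedding (S i))
    (hK : ∀ᵐ x ∂P, x ∈ K) (hdisj : Pairwise (Disjoint on fun i => S i '' K)) (hJ : J ⊆ K) {i : ι}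
    (hw₀ : w i ≠ 0) (hw : w i ≠ ∞) (f : α → E) :
    ⨍ x in S i '' J, f x ∂P = ⨍ x in J, f (S i x) ∂P := by
  have hw' : (w i).toReal ≠ 0 := ENNReal.toReal_ne_zero.2 ⟨hw₀, hw⟩
  rw [setAverage_eq, setAverage_eq, measureReal_def, hP.measure_image hS hK hdisj hJ i,
    hP.restrict_image hS hK hdisj hJ i, integral_smul_measure, (hS i).integral_map,
    ENNReal.toReal_mul, smul_smul, mul_inv_rev, inv_mul_cancel_right₀ hw', measureReal_def]

theorem integral_eq (hP : IsSelfSimilar w S P) (hS : ∀ i, MeasurableEmbedding (S i)) {f : α → E}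
    (hf : Integrable f P) : ∫ x, f x ∂P = ∑ i, (w i).toReal • ∫ x, f (S i x) ∂P := by
  have hf_branch : ∀ i ∈ Finset.univ, Integrable f (w i • P.map (S i)) := by
    rwa [hP, integrable_finsetSum_measure] at hf
  calc ∫ x, f x ∂P = ∫ x, f x ∂(∑ i, w i • P.map (S i)) := by rw [← hP]
    _ = ∑ i, (w i).toReal • ∫ x, f (S i x) ∂P := by
      simp only [integral_finsetSum_measure hf_branch, integral_smul_measure, (hS _).integral_map]

end Measure

section Affine

variable {ι E : Type*} [Fintype ι] [NormedAddCommGroup E] [NormedSpace ℝ E] [CompleteSpace E]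
  [MeasurableSpace E] {w : ι → ℝ≥0∞} {S : ι → E →ᴬ[ℝ] E} {P : Measure E}

theorem integral_id_eq [IsProbabilityMeasure P] (hP : IsSelfSimilar w (fun i => S i) P)
    (hS : ∀ i, MeasurableEmbedding (S i)) (hint : Integrable (fun x => x) P) :
    ∫ x, x ∂P = ∑ i, (w i).toReal • S i (∫ x, x ∂P) := by
  have hcomp (i : ι) : ∫ x, S i x ∂P = S i (∫ x, x ∂P) := by
    simpa only [average_eq_integral] using average_continuousAffineMap_comp (S i) hint
  simpa only [hcomp] using hP.integral_eq hS hint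

theorem setAverage_id_wordCell [IsProbabilityMeasure P] (hP : IsSelfSimilar w (fun i => S i) P)
    (hS : ∀ i, MeasurableEmbedding (S i)) {K : Set E} (hK : ∀ᵐ x ∂P, x ∈ K)
    (hdisj : Pairwise (Disjoint on fun i => S i '' K)) (hSK : ∀ i, MapsTo (S i) K K)
    (hint : Integrable (fun x => x) P) (hw₀ : ∀ i, w i ≠ 0) (hw : ∀ i, w i ≠ ∞) (σ : List ι) :
    ⨍ x in wordCell (fun i => S i) K σ, x ∂P = σ.foldr (fun i => S i) (∫ x, x ∂P) := by
  induction σ with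
  | nil =>
    rw [wordCell, List.foldr_nil, List.foldr_nil, Measure.restrict_eq_self_of_ae_mem hK,
      average_eq_integral]
  | cons i σ ih =>
    let J := wordCell (fun i => S i) K σ
    have : NeZero (P J) := ⟨by
      rw [hP.measure_wordCell hS hK hdisj hSK σ]
      exact List.prod_ne_zero (by simp [hw₀])⟩
    calc ⨍ x in S i '' J, x ∂P = ⨍ x in J, S i x ∂P :=
          hP.setAverage_image hS hK hdisj (wordCell_subset hSK σ) (hw₀ i) (hw i) _
      _ = S i (⨍ x in J, x ∂P) := average_continuousAffineMap_comp (S i) hint.integrableOn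
      _ = S i (σ.foldr (fun i => S i) (∫ x, x ∂P)) := by rw [ih]

end Affine

end IsSelfSimilar

section Line

variable {k : Type*} [Field k] [LinearOrder k] [IsStrictOrderedRing k]

theorem isLeast_image_abs_sub {s : Set k} {a l u x : k} (ha : a ∈ s) (hx : x ∈ Icc l u)
    (hl : ∀ b ∈ s, b < a → (b + a) / 2 ≤ l) (hu : ∀ b ∈ s, a < b → u ≤ (a + b) / 2) :
    IsLeast ((fun b => |x - b|) '' s) |x - a| := by
  refine ⟨mem_image_of_mem _ ha, forall_mem_image.2 fun b hb => ?_⟩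
  rcases lt_trichotomy b a with hba | rfl | hab
  · have hmid : (b + a) / 2 ≤ x := (hl b hb hba).trans hx.1
    grind
  · exact le_rfl
  · have hmid : x ≤ (a + b) / 2 := hx.2.trans (hu b hb hab)
    grind

end Line

/-- The maps `S₁ x = x / 4` and `S₂ x = x / 2 + 1 / 2`, as the affine maps sending `[0, 1]` onto
`[0, 1 / 4]` and `[1 / 2, 1]`; the index `0` stands for `S₁` and `1` for `S₂`. -/
noncomputable def twoMaps : Fin 2 → ℝ →ᴬ[ℝ] ℝ :=
  ![.lineMap 0 (1 / 4), .lineMap (1 / 2) 1]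

/-- The probabilities `p₁ = 1 / 4` and `p₂ = 3 / 4` of the two maps. -/
noncomputable def twoWeights : Fin 2 → ℝ≥0∞ :=
  ![4⁻¹, 3 / 4]

theorem twoMaps_zero_apply (x : ℝ) : twoMaps 0 x = x / 4 := by
  simp [twoMaps, ContinuousAffineMap.coe_lineMap_eq, AffineMap.lineMap_apply_ring', div_eq_mul_inv]

theorem twoMaps_one_apply (x : ℝ) : twoMaps 1 x = x / 2 + 1 / 2 := by
  simp only [twoMaps, Matrix.cons_val_one, Matrix.cons_val_fin_one,
    ContinuousAffineMap.coe_lineMap_eq, AffineMap.lineMap_apply_ring']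
  ring

theorem isSelfSimilar_twoMaps_iff {P : Measure ℝ} :
    IsSelfSimilar twoWeights (fun i => twoMaps i) P ↔
      P = (4⁻¹ : ℝ≥0∞) • P.map (fun x : ℝ => x / 4) +
        (3 / 4 : ℝ≥0∞) • P.map (fun x : ℝ => x / 2 + 1 / 2) := by
  rw [IsSelfSimilar, Fin.sum_univ_two, funext twoMaps_zero_apply, funext twoMaps_one_apply]
  rfl

theorem image_twoMaps_zero_Icc (c d : ℝ) : twoMaps 0 '' Icc c d = Icc (c / 4) (d / 4) := by
  simpa only [funext twoMaps_zero_apply, add_zero, inv_mul_eq_div] using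
    image_affine_Icc' (a := (4⁻¹ : ℝ)) (by norm_num) 0 c d

theorem image_twoMaps_one_Icc (c d : ℝ) :
    twoMaps 1 '' Icc c d = Icc (c / 2 + 1 / 2) (d / 2 + 1 / 2) := by
  simpa only [funext twoMaps_one_apply, inv_mul_eq_div] using
    image_affine_Icc' (a := (2⁻¹ : ℝ)) (by norm_num) (1 / 2) c d

theorem measurableEmbedding_twoMaps (i : Fin 2) : MeasurableEmbedding (twoMaps i) := by
  refine (twoMaps i).continuous.measurableEmbedding ?_
  fin_cases i
  · exact fun x y h => by simpa [twoMaps_zero_apply] using h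
  · exact fun x y h => by simpa [twoMaps_one_apply] using h

theorem mapsTo_twoMaps_Icc (i : Fin 2) : MapsTo (twoMaps i) (Icc 0 1) (Icc 0 1) := by
  rw [mapsTo_iff_image_subset]
  fin_cases i
  · exact (image_twoMaps_zero_Icc 0 1).trans_subset (Icc_subset_Icc (by norm_num) (by norm_num))
  · exact (image_twoMaps_one_Icc 0 1).trans_subset (Icc_subset_Icc (by norm_num) (by norm_num))

theorem pairwise_disjoint_image_twoMaps :
    Pairwise (Disjoint on fun i => twoMaps i '' Icc 0 1) := by
  have hdisj : Disjoint (twoMaps 0 '' Icc 0 1) (twoMaps 1 '' Icc 0 1) := by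
    rw [image_twoMaps_zero_Icc, image_twoMaps_one_Icc, disjoint_left]
    rintro x ⟨-, hx⟩ ⟨hx', -⟩
    linarith
  refine (pairwise_disjoint_on _).2 fun i j hij => ?_
  obtain ⟨rfl, rfl⟩ : i = 0 ∧ j = 1 := by omega
  exact hdisj

theorem twoWeights_ne_zero (i : Fin 2) : twoWeights i ≠ 0 := by
  fin_cases i <;> simp [twoWeights]

theorem twoWeights_ne_top (i : Fin 2) : twoWeights i ≠ ∞ := by
  fin_cases i <;> simp [twoWeights, ENNReal.div_eq_top]

theorem wordCell_twoMaps_zero : wordCell (fun i => twoMaps i) (Icc 0 1) [0] = Icc 0 (1 / 4) := by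
  simp only [wordCell, List.foldr_cons, List.foldr_nil, image_twoMaps_zero_Icc, zero_div]

theorem wordCell_twoMaps_one_zero :
    wordCell (fun i => twoMaps i) (Icc 0 1) [1, 0] = Icc (1 / 2) (5 / 8) := by
  simp only [wordCell, List.foldr_cons, List.foldr_nil, image_twoMaps_zero_Icc,
    image_twoMaps_one_Icc]
  norm_num

theorem wordCell_twoMaps_one_one :
    wordCell (fun i => twoMaps i) (Icc 0 1) [1, 1] = Icc (3 / 4) 1 := by
  simp only [wordCell, List.foldr_cons, List.foldr_nil, image_twoMaps_one_Icc]
  norm_num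

theorem ae_mem_union_image_twoMaps {P : Measure ℝ}
    (hP : IsSelfSimilar twoWeights (fun i => twoMaps i) P) {A B : Set ℝ}
    (hA : ∀ᵐ x ∂P, x ∈ A) (hB : ∀ᵐ x ∂P, x ∈ B) :
    ∀ᵐ x ∂P, x ∈ twoMaps 0 '' A ∪ twoMaps 1 '' B := by
  have hAB (i : Fin 2) : ∀ᵐ x ∂P, x ∈ (![A, B] : Fin 2 → Set ℝ) i := by
    fin_cases i
    exacts [hA, hB]
  filter_upwards [hP.ae_mem_iUnion_image measurableEmbedding_twoMaps hAB] with x hx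
  rwa [mem_iUnion, Fin.exists_fin_two] at hx

theorem ae_mem_cells_twoMaps {P : Measure ℝ}
    (hP : IsSelfSimilar twoWeights (fun i => twoMaps i) P) (hK : ∀ᵐ x ∂P, x ∈ Icc (0 : ℝ) 1) :
    ∀ᵐ x ∂P, x ∈ Icc (0 : ℝ) (1 / 4) ∪ Icc (1 / 2) (5 / 8) ∪ Icc (3 / 4) 1 := by
  have himage : twoMaps 0 '' Icc 0 1 ∪ twoMaps 1 '' (twoMaps 0 '' Icc 0 1 ∪ twoMaps 1 '' Icc 0 1) =
      Icc (0 : ℝ) (1 / 4) ∪ Icc (1 / 2) (5 / 8) ∪ Icc (3 / 4) 1 := by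
    rw [image_union, ← union_assoc, image_twoMaps_zero_Icc, image_twoMaps_one_Icc,
      image_twoMaps_one_Icc, image_twoMaps_one_Icc]
    norm_num
  rw [← himage]
  exact ae_mem_union_image_twoMaps hP hK (ae_mem_union_image_twoMaps hP hK hK)

section TwoMaps

variable {P : Measure ℝ} [IsProbabilityMeasure P]

theorem integral_id_of_isSelfSimilar_twoMaps (hP : IsSelfSimilar twoWeights (fun i => twoMaps i) P)
    (hint : Integrable (fun x => x) P) : ∫ x, x ∂P = 2 / 3 := by
  have hmean := hP.integral_id_eq measurableEmbedding_twoMaps hint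
  simp only [Fin.sum_univ_two, twoMaps_zero_apply, twoMaps_one_apply, twoWeights,
    Matrix.cons_val_zero, Matrix.cons_val_one, Matrix.cons_val_fin_one, ENNReal.toReal_inv,
    ENNReal.toReal_div, ENNReal.toReal_ofNat, smul_eq_mul] at hmean
  linarith

theorem inv_mul_setIntegral_wordCell_twoMaps
    (hP : IsSelfSimilar twoWeights (fun i => twoMaps i) P) (hK : ∀ᵐ x ∂P, x ∈ Icc (0 : ℝ) 1)
    (σ : List (Fin 2)) :
    (P (wordCell (fun i => twoMaps i) (Icc 0 1) σ)).toReal⁻¹ *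
      ∫ x in wordCell (fun i => twoMaps i) (Icc 0 1) σ, x ∂P =
        σ.foldr (fun i => twoMaps i) (2 / 3) := by
  have hint : Integrable (fun x => x) P := .of_mem_Icc 0 1 aemeasurable_id hK
  rw [← measureReal_def, ← smul_eq_mul, ← setAverage_eq,
    hP.setAverage_id_wordCell measurableEmbedding_twoMaps hK pairwise_disjoint_image_twoMaps
      mapsTo_twoMaps_Icc hint twoWeights_ne_zero twoWeights_ne_top σ,
    integral_id_of_isSelfSimilar_twoMaps hP hint]

end TwoMaps

theorem stmt_19 (P : Measure ℝ) [IsProbabilityMeasure P]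
    (hP : P = (4⁻¹ : ENNReal) • P.map (fun x : ℝ => x / 4) +
              (3 / 4 : ENNReal) • P.map (fun x : ℝ => x / 2 + 1 / 2))
    (hsupp : P (Set.Icc (0 : ℝ) 1) = 1) :
    (∫ x, x ∂P) = 2 / 3 ∧
    P (Set.Icc (0 : ℝ) (1 / 4) ∪ Set.Icc (1 / 2) (5 / 8) ∪ Set.Icc (3 / 4) 1) = 1 ∧
    (P (Set.Icc (0 : ℝ) (1 / 4))).toReal⁻¹ *
        (∫ x in Set.Icc (0 : ℝ) (1 / 4), x ∂P) = 1 / 6 ∧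
    (P (Set.Icc (1 / 2 : ℝ) (5 / 8))).toReal⁻¹ *
        (∫ x in Set.Icc (1 / 2 : ℝ) (5 / 8), x ∂P) = 7 / 12 ∧
    (P (Set.Icc (3 / 4 : ℝ) 1)).toReal⁻¹ *
        (∫ x in Set.Icc (3 / 4 : ℝ) 1, x ∂P) = 11 / 12 ∧
    (∀ x ∈ Set.Icc (0 : ℝ) (1 / 4),
      IsLeast ((fun b => |x - b|) '' ({1 / 6, 7 / 12, 11 / 12} : Set ℝ)) |x - 1 / 6|) ∧
    (∀ x ∈ Set.Icc (1 / 2 : ℝ) (5 / 8),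
      IsLeast ((fun b => |x - b|) '' ({1 / 6, 7 / 12, 11 / 12} : Set ℝ)) |x - 7 / 12|) ∧
    (∀ x ∈ Set.Icc (3 / 4 : ℝ) 1,
      IsLeast ((fun b => |x - b|) '' ({1 / 6, 7 / 12, 11 / 12} : Set ℝ)) |x - 11 / 12|) := by
  have hself := isSelfSimilar_twoMaps_iff.2 hP
  have hK : ∀ᵐ x ∂P, x ∈ Icc (0 : ℝ) 1 := (mem_ae_iff_prob_eq_one measurableSet_Icc).2 hsupp
  have hint : Integrable (fun x => x) P := .of_mem_Icc 0 1 aemeasurable_id hK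
  have hmeas : MeasurableSet (Icc (0 : ℝ) (1 / 4) ∪ Icc (1 / 2) (5 / 8) ∪ Icc (3 / 4) 1) :=
    (measurableSet_Icc.union measurableSet_Icc).union measurableSet_Icc
  have hcentroid := inv_mul_setIntegral_wordCell_twoMaps hself hK
  refine ⟨integral_id_of_isSelfSimilar_twoMaps hself hint,
    (mem_ae_iff_prob_eq_one hmeas).1 (ae_mem_cells_twoMaps hself hK), ?_, ?_, ?_, ?_, ?_, ?_⟩
  · rw [← wordCell_twoMaps_zero, hcentroid]
    norm_num [twoMaps_zero_apply]
  · rw [← wordCell_twoMaps_one_zero, hcentroid]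
    norm_num [twoMaps_zero_apply, twoMaps_one_apply]
  · rw [← wordCell_twoMaps_one_one, hcentroid]
    norm_num [twoMaps_one_apply]
  all_goals exact fun x hx => isLeast_image_abs_sub (by simp) hx (by norm_num) (by norm_num)
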